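/- arXiv:1506.08382 — 4 statements merged into one kernel-verified Lean document; each statement's English description precedes it below -/
import Mathlib

section
/- For every positive real number m and every positive real number c, f(m,c)^m = f(1,c). -/
/-- `f m c = ∑_{k=0}^∞ (km+1)^{k-1} c^k e^{-c(km+1)/m} / (m^k k!)`, where the factor
`(km+1)^{k-1}` for `k = 0` is interpreted as `1` (here via `ℕ`-subtraction in the exponent,
which gives `(0·m+1)^0 = 1`). -/
noncomputable def f (m c : ℝ) : ℝ :=
  ∑' k : ℕ, ((k : ℝ) * m + 1) ^ (k - 1) * c ^ k *
    Real.exp (-c * ((k : ℝ) * m + 1) / m) / (m ^ k * (Nat.factorial k : ℝ))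

noncomputable def abelA : ℕ → ℝ → ℝ
  | 0, _ => 1
  | (n+1), x => x * (x + (n+1)) ^ n / ((n+1).factorial : ℝ)

lemma abelA_zero (x : ℝ) : abelA 0 x = 1 := rfl
lemma abelA_succ (n : ℕ) (x : ℝ) : abelA (n+1) x = x * (x + (n+1)) ^ n / ((n+1).factorial : ℝ) := rfl

lemma abelA_deriv (n : ℕ) (x : ℝ) : HasDerivAt (abelA (n+1)) (abelA n (x+1)) x := by
  have h : HasDerivAt (fun x : ℝ => x * (x + (n+1)) ^ n / ((n+1).factorial : ℝ))
      ((1 * (x + (n+1)) ^ n + x * ((n:ℝ) * (x + (n+1)) ^ (n-1) * 1)) / ((n+1).factorial : ℝ)) x :=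
    ((hasDerivAt_id x).mul (((hasDerivAt_id x).add_const ((n:ℝ)+1)).pow n)).div_const _
  have e : abelA (n+1) = (fun x : ℝ => x * (x + (n+1)) ^ n / ((n+1).factorial : ℝ)) := rfl
  rw [e]
  convert h using 1
  cases n with
  | zero => simp [abelA]
  | succ n =>
    rw [abelA_succ, Nat.factorial_succ (n+1)]
    have : ((n+1).factorial : ℝ) ≠ 0 := by positivity
    have : (n:ℝ) + 1 + 1 ≠ 0 := by positivity
    push_cast
    have e1 : n + 1 - 1 = n := rfl
    try rw [e1]
    field_simp
    ring

lemma abelA_conv (n : ℕ) : ∀ x y : ℝ,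
    ∑ p ∈ Finset.HasAntidiagonal.antidiagonal n, abelA p.1 x * abelA p.2 y = abelA n (x + y) := by
  induction n with
  | zero => intro x y; simp [abelA]
  | succ n ih =>
    intro x y
    have hd : ∀ t : ℝ, HasDerivAt (fun x => ∑ p ∈ Finset.HasAntidiagonal.antidiagonal (n+1), abelA p.1 x * abelA p.2 y - abelA (n+1) (x+y)) 0 t := by
      intro t
      simp only [Finset.Nat.sum_antidiagonal_succ]
      have h1 : HasDerivAt (fun x => ∑ p ∈ Finset.HasAntidiagonal.antidiagonal n, abelA (p.1+1) x * abelA p.2 y)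
          (∑ p ∈ Finset.HasAntidiagonal.antidiagonal n, abelA p.1 (t+1) * abelA p.2 y) t :=
        HasDerivAt.fun_sum fun p _ => (abelA_deriv p.1 t).mul_const _
      have h2 : HasDerivAt (fun x => abelA (n+1) (x+y)) (abelA n (t+y+1)) t :=
        (abelA_deriv n (t+y)).comp_add_const t y
      have h3 := (h1.const_add (abelA 0 0 * abelA (n+1) y)).sub h2
      rw [ih, show t+1+y = t+y+1 by ring, sub_self] at h3
      exact h3
    have := is_const_of_deriv_eq_zero (fun t => (hd t).differentiableAt) (fun t => (hd t).deriv) x 0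
    rw [← sub_eq_zero, this]
    simp [Finset.Nat.sum_antidiagonal_succ, abelA]

lemma abelA_mono_abs (n : ℕ) (x : ℝ) : |abelA n x| ≤ abelA n |x| := by
  cases n with
  | zero => simp [abelA]
  | succ n =>
    simp only [abelA_succ, abs_div, abs_mul, abs_pow, Nat.abs_cast]
    gcongr
    refine (abs_add_le _ _).trans ?_
    rw [abs_of_nonneg (by positivity : (0:ℝ) ≤ n+1)]

lemma abelA_nonneg (n : ℕ) (x : ℝ) (hx : 0 ≤ x) : 0 ≤ abelA n x := by
  cases n <;> simp only [abelA] <;> positivity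

lemma abelA_bound (n : ℕ) (x : ℝ) (hx : 0 ≤ x) :
    abelA (n+1) x * Real.exp (-1) ^ (n+1) ≤ x * Real.exp x * (1 / ((n+1 : ℕ):ℝ) ^ (3/2:ℝ)) := by
  set N : ℝ := ((n+1:ℕ):ℝ) with hN
  have hN0 : 0 < N := by positivity
  have hN1 : (n:ℝ)+1 = N := by simp [hN]
  have hs := Stirling.le_factorial_stirling (n+1)
  rw [← hN] at hs
  have hs' : √N * (N / Real.exp 1) ^ (n+1) ≤ ((n+1).factorial : ℝ) := by
    refine le_trans ?_ hs
    gcongr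
    nlinarith [Real.pi_gt_three]
  have hp : (x + N) ^ n ≤ N ^ n * Real.exp x := by
    have : x + N ≤ N * Real.exp (x / N) := by
      have := Real.add_one_le_exp (x / N)
      calc x + N = N * (x / N + 1) := by field_simp
        _ ≤ _ := by gcongr
    calc (x+N)^n ≤ (N * Real.exp (x/N))^n := by gcongr
      _ = N^n * Real.exp (n * (x/N)) := by rw [mul_pow, ← Real.exp_nat_mul]
      _ ≤ _ := by
        gcongr
        rw [mul_div_assoc', div_le_iff₀ hN0]
        nlinarith
  have h32 : N ^ (3/2:ℝ) = N * √N := by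
    rw [Real.sqrt_eq_rpow, ← Real.rpow_one_add' hN0.le (by norm_num)]; norm_num
  rw [abelA_succ, hN1, h32]
  have hsq : 0 < √N := Real.sqrt_pos.2 hN0
  calc x * (x+N)^n / ((n+1).factorial:ℝ) * Real.exp (-1) ^ (n+1)
      ≤ x * (N^n * Real.exp x) / (√N * (N / Real.exp 1) ^ (n+1)) * Real.exp (-1)^(n+1) := by gcongr
    _ = _ := by
      rw [Real.exp_neg, div_pow, inv_pow]
      field_simp
      ring

lemma abelA_summable (z : ℝ) (hz0 : 0 ≤ z) (hz : z ≤ Real.exp (-1)) (x : ℝ) :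
    Summable (fun n => ‖abelA n x * z ^ n‖) := by
  rw [← summable_nat_add_iff 1]
  have hs : Summable (fun n : ℕ => |x| * Real.exp |x| * (1 / ((n+1 : ℕ):ℝ) ^ (3/2:ℝ))) :=
    (((summable_nat_add_iff 1).2 (Real.summable_one_div_nat_rpow.2 (by norm_num : (1:ℝ) < 3/2)))).mul_left _
  refine Summable.of_nonneg_of_le (fun _ => norm_nonneg _) (fun n => ?_) hs
  refine le_trans ?_ (abelA_bound n |x| (abs_nonneg x))
  rw [Real.norm_eq_abs, abs_mul, abs_pow, abs_of_nonneg hz0]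
  have := abelA_mono_abs (n+1) x
  have := abelA_nonneg (n+1) |x| (abs_nonneg x)
  gcongr

noncomputable def abelH (z x : ℝ) : ℝ := ∑' n, abelA n x * z ^ n

lemma abelH_add (z : ℝ) (hz0 : 0 ≤ z) (hz : z ≤ Real.exp (-1)) (x y : ℝ) :
    abelH z (x + y) = abelH z x * abelH z y := by
  unfold abelH
  rw [tsum_mul_tsum_eq_tsum_sum_antidiagonal_of_summable_norm (abelA_summable z hz0 hz x)
    (abelA_summable z hz0 hz y)]
  congr 1; ext n
  rw [← abelA_conv, Finset.sum_mul]
  refine Finset.sum_congr rfl fun p hp => ?_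
  rw [← Finset.HasAntidiagonal.mem_antidiagonal.1 hp, pow_add]; ring

lemma abelH_ge (z : ℝ) (hz0 : 0 ≤ z) (hz : z ≤ Real.exp (-1)) (x : ℝ) (hx : 0 ≤ x) :
    1 ≤ abelH z x := by
  have := (abelA_summable z hz0 hz x).of_norm.le_tsum 0
    (fun n _ => mul_nonneg (abelA_nonneg n x hx) (pow_nonneg hz0 n))
  simpa [abelA_zero, abelH] using this

lemma abelH_zero (z : ℝ) : abelH z 0 = 1 := by
  unfold abelH
  rw [tsum_eq_single 0]
  · simp [abelA]
  · intro n hn; cases n with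
    | zero => exact absurd rfl hn
    | succ n => simp [abelA]

lemma abelH_pos (z : ℝ) (hz0 : 0 ≤ z) (hz : z ≤ Real.exp (-1)) (x : ℝ) : 0 < abelH z x := by
  have h1 := abelH_add z hz0 hz (x/2) (x/2)
  have h2 := abelH_add z hz0 hz x (-x)
  rw [add_neg_cancel, abelH_zero] at h2
  rw [add_halves] at h1
  have : 0 ≤ abelH z x := h1 ▸ mul_self_nonneg _
  refine lt_of_le_of_ne this fun h => ?_
  rw [← h] at h2; simp at h2

lemma abelH_rpow (z : ℝ) (hz0 : 0 ≤ z) (hz : z ≤ Real.exp (-1)) (x : ℝ) :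
    abelH z x = abelH z 1 ^ x := by
  let L : ℝ →+ ℝ := 
    { toFun := fun x => Real.log (abelH z x)
      map_zero' := by simp [abelH_zero]
      map_add' := fun x y => by
        rw [abelH_add z hz0 hz, Real.log_mul (abelH_pos z hz0 hz x).ne' (abelH_pos z hz0 hz y).ne'] }
  have hm : Monotone L := by
    intro a b hab
    have : L b = L a + L (b - a) := by rw [← map_add]; congr 1; ring
    have h2 : 0 ≤ L (b - a) := Real.log_nonneg (abelH_ge z hz0 hz _ (sub_nonneg.2 hab))
    linarith
  have hc : Continuous L := MeasureTheory.Measure.AddMonoidHom.continuous_of_measurable L hm.measurable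
  have := map_real_smul L hc x 1
  simp only [smul_eq_mul, mul_one] at this
  have h3 : Real.log (abelH z x) = x * Real.log (abelH z 1) := this
  rw [Real.rpow_def_of_pos (abelH_pos z hz0 hz 1), mul_comm, ← h3, Real.exp_log (abelH_pos z hz0 hz x)]

lemma f_eq (m : ℝ) (hm : 0 < m) (c : ℝ) :
    f m c = Real.exp (-c / m) * abelH (c * Real.exp (-c)) (1/m) := by
  unfold f abelH
  rw [← tsum_mul_left]
  congr 1; ext k
  have he : Real.exp (-c * ((k : ℝ) * m + 1) / m) = Real.exp (-c/m) * Real.exp (-c)^k := by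
    rw [← Real.exp_nat_mul, ← Real.exp_add]; congr 1; field_simp; ring
  rw [he, mul_pow]
  cases k with
  | zero => simp [abelA]
  | succ n =>
    rw [abelA_succ]
    have : 1/m + ((n:ℝ)+1) = (((n+1:ℕ):ℝ)*m+1)/m := by push_cast; field_simp; ring
    rw [this, div_pow]
    simp only [Nat.add_sub_cancel]
    field_simp
    ring

theorem f_rpow_real (m : ℝ) (hm : 0 < m) (c : ℝ) (hc : 0 < c) :
    f m c ^ m = f 1 c := by
  have hz0 : 0 ≤ c * Real.exp (-c) := by positivity
  have hz : c * Real.exp (-c) ≤ Real.exp (-1) := by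
    have := Real.add_one_le_exp (c - 1)
    calc c * Real.exp (-c) ≤ Real.exp (c-1) * Real.exp (-c) := by gcongr; linarith
      _ = _ := by rw [← Real.exp_add]; congr 1; ring
  have hp := abelH_pos _ hz0 hz 1
  rw [f_eq m hm, f_eq 1 one_pos, abelH_rpow _ hz0 hz (1/m),
    Real.mul_rpow (Real.exp_pos _).le (Real.rpow_nonneg hp.le _), ← Real.rpow_mul hp.le,
    ← Real.exp_mul, one_div_mul_cancel hm.ne', Real.rpow_one, div_mul_cancel₀ _ hm.ne', div_one, div_one]
end

section
/- For every real number c > 1, f(1,c) lies in the open interval (0,1), satisfies f(1,c) = e^{-c(1 - f(1,c))}, and is the unique z ∈ (0,1) satisfying z = e^{-c(1-z)}. -/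
/-- The coefficients `(k+1)^(k-1)/k!`. -/
noncomputable def aco (k : ℕ) : ℝ := ((k : ℝ) + 1) ^ (k - 1) / (Nat.factorial k : ℝ)

lemma aco_nonneg (k : ℕ) : 0 ≤ aco k := by unfold aco; positivity

lemma aco_le (k : ℕ) : aco k ≤ Real.exp ((k : ℝ) + 1) := by
  refine le_trans ?_ (Real.pow_div_factorial_le_exp (x := (k : ℝ) + 1) (by positivity) k)
  unfold aco
  gcongr
  · linarith [Nat.cast_nonneg (α := ℝ) k]
  · omega

/-- The generating function. -/
noncomputable def Fgen (x : ℝ) : ℝ := ∑' k : ℕ, aco k * x ^ k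

lemma Fgen_eq : Fgen = (FormalMultilinearSeries.ofScalars ℝ aco).sum := by
  funext x
  have := FormalMultilinearSeries.ofScalars_sum_eq (E := ℝ) aco x
  unfold FormalMultilinearSeries.ofScalarsSum at this
  rw [this]
  simp [Fgen]

lemma radius_le : ENNReal.ofReal (Real.exp (-1)) ≤
    (FormalMultilinearSeries.ofScalars ℝ aco).radius := by
  refine FormalMultilinearSeries.le_radius_of_bound _ (Real.exp 1) fun n => ?_
  rw [Real.coe_toNNReal _ (Real.exp_pos _).le, FormalMultilinearSeries.ofScalars_norm, Real.norm_of_nonneg (aco_nonneg n)]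
  calc aco n * (Real.exp (-1)) ^ n ≤ Real.exp ((n : ℝ) + 1) * (Real.exp (-1)) ^ n := by
        gcongr; exact aco_le n
    _ = Real.exp 1 := by
        rw [← Real.exp_nat_mul, ← Real.exp_add]; congr 1; ring

lemma Fgen_analytic (x : ℝ) (hx0 : 0 ≤ x) (hx : x < Real.exp (-1)) : AnalyticAt ℝ Fgen x := by
  rw [Fgen_eq]
  have hpos : 0 < (FormalMultilinearSeries.ofScalars ℝ aco).radius := by
    refine lt_of_lt_of_le ?_ radius_le
    exact ENNReal.ofReal_pos.2 (Real.exp_pos (-1))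
  refine ((FormalMultilinearSeries.ofScalars ℝ aco).hasFPowerSeriesOnBall hpos).analyticAt_of_mem ?_
  rw [Metric.mem_eball, edist_zero_right]
  refine lt_of_lt_of_le ?_ radius_le
  rw [← ofReal_norm, Real.norm_of_nonneg hx0]
  exact (ENNReal.ofReal_lt_ofReal_iff (Real.exp_pos _)).2 hx

lemma mul_exp_lt (μ : ℝ) (h : μ ≠ 1) : μ * Real.exp (-μ) < Real.exp (-1) := by
  have := Real.add_one_lt_exp (sub_ne_zero.2 h)
  have h2 : Real.exp (-1) = Real.exp (μ - 1) * Real.exp (-μ) := by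
    rw [← Real.exp_add]; congr 1; ring
  rw [h2]
  have := Real.exp_pos (-μ)
  gcongr
  linarith

/-- The double family. -/
noncomputable def dbl (μ : ℝ) (p : ℕ × ℕ) : ℝ :=
  aco p.1 * μ ^ p.1 * ((-((p.1 : ℝ) + 1) * μ) ^ p.2 / (Nat.factorial p.2 : ℝ))

lemma hasSum_exp (x : ℝ) : HasSum (fun n : ℕ => x ^ n / (Nat.factorial n : ℝ)) (Real.exp x) := by
  rw [Real.exp_eq_exp_ℝ]
  exact NormedSpace.expSeries_div_hasSum_exp x

lemma dbl_summable (μ : ℝ) (h0 : 0 < μ) (h1 : μ < 1 / 10) : Summable (dbl μ) := by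
  apply Summable.of_norm
  have key : ∀ k j : ℕ, ‖dbl μ (k, j)‖ =
      aco k * μ ^ k * ((((k : ℝ) + 1) * μ) ^ j / (Nat.factorial j : ℝ)) := by
    intro k j
    have hk : (0 : ℝ) ≤ k := Nat.cast_nonneg k
    simp only [dbl, norm_mul, norm_div, norm_pow, norm_neg, Real.norm_eq_abs, abs_of_pos h0,
      abs_of_nonneg (aco_nonneg k), Nat.abs_cast, abs_of_nonneg (add_nonneg hk zero_le_one)]
  rw [summable_prod_of_nonneg (fun _ => norm_nonneg _)]
  constructor
  · intro k
    simp only [key]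
    exact (hasSum_exp _).summable.mul_left _
  · simp only [key, tsum_mul_left, (hasSum_exp _).tsum_eq]
    have hr : Real.exp (1 + μ) * μ < 1 := by
      have h3 : Real.exp (1 + μ) ≤ Real.exp 1 * Real.exp 1 := by
        rw [← Real.exp_add]; apply Real.exp_le_exp.2; linarith
      have := Real.exp_one_lt_d9
      have := Real.exp_pos 1
      have : Real.exp (1 + μ) < 10 := by nlinarith
      nlinarith
    refine Summable.of_nonneg_of_le (fun k => ?_) (fun k => ?_)
      ((summable_geometric_of_lt_one (by positivity) hr).mul_left (Real.exp (1 + μ)))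
    · have := aco_nonneg k
      positivity
    · calc aco k * μ ^ k * Real.exp (((k : ℝ) + 1) * μ)
          ≤ Real.exp ((k : ℝ) + 1) * μ ^ k * Real.exp (((k : ℝ) + 1) * μ) := by
            gcongr; exact aco_le k
        _ = Real.exp (1 + μ) * (Real.exp (1 + μ) * μ) ^ k := by
            rw [mul_pow, ← Real.exp_nat_mul, ← mul_assoc, ← Real.exp_add, mul_right_comm,
              ← Real.exp_add]
            congr 2; ring

lemma dbl_antidiag (μ : ℝ) (n : ℕ) :
    ∑ p ∈ Finset.HasAntidiagonal.antidiagonal n, dbl μ p = if n = 0 then 1 else 0 := by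
  rcases Nat.eq_zero_or_pos n with rfl | hn
  · simp [dbl, aco]
  rw [if_neg hn.ne']
  have hd := congrFun (fwdDiff_iter_pow_eq_zero_of_lt (R := ℝ) (n := n) (j := n - 1) (by omega)) 1
  rw [fwdDiff_iter_eq_sum_shift] at hd
  rw [Finset.Nat.sum_antidiagonal_eq_sum_range_succ_mk]
  have : ∑ k ∈ Finset.range n.succ, dbl μ (k, n - k) = μ ^ n / (Nat.factorial n : ℝ) *
    ∑ k ∈ Finset.range (n + 1), ((-1 : ℤ) ^ (n - k) * n.choose k) • ((1 : ℝ) + k • (1 : ℝ)) ^ (n - 1) := by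
    rw [Finset.mul_sum]
    refine Finset.sum_congr rfl fun k hk => ?_
    have hkn : k ≤ n := by simpa [Nat.lt_succ_iff] using hk
    obtain ⟨j, rfl⟩ := Nat.exists_eq_add_of_le hkn
    simp only [dbl, aco, add_tsub_cancel_left]
    have hpow : ((k : ℝ) + 1) ^ (k - 1) * ((k : ℝ) + 1) ^ j = ((k : ℝ) + 1) ^ (k + j - 1) := by
      rcases Nat.eq_zero_or_pos k with rfl | hk
      · simp
      · rw [← pow_add]; congr 1; omega
    rw [zsmul_eq_mul]
    push_cast
    rw [Nat.cast_add_choose, nsmul_eq_mul, mul_one, add_comm (1 : ℝ), ← hpow, neg_mul, neg_pow,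
      mul_pow, pow_add]
    have := Nat.factorial_pos (k + j)
    have := Nat.factorial_pos k
    have := Nat.factorial_pos j
    field_simp
  rw [this, hd]
  simp

lemma small_case (μ : ℝ) (h0 : 0 < μ) (h1 : μ < 1 / 10) :
    Fgen (μ * Real.exp (-μ)) * Real.exp (-μ) = 1 := by
  have hs := dbl_summable μ h0 h1
  have e1 : ∑' p, dbl μ p = Fgen (μ * Real.exp (-μ)) * Real.exp (-μ) := by
    rw [hs.tsum_prod, Fgen, ← tsum_mul_right]
    refine tsum_congr fun k => ?_
    simp only [dbl, tsum_mul_left, (hasSum_exp _).tsum_eq]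
    rw [mul_pow, ← Real.exp_nat_mul, ← mul_assoc, mul_assoc (aco k * μ ^ k), ← Real.exp_add]
    congr 2; ring
  have e2 : ∑' p, dbl μ p = 1 := by
    rw [← Finset.HasAntidiagonal.sigmaAntidiagonalEquivProd.tsum_eq]
    have hs' := (Finset.HasAntidiagonal.sigmaAntidiagonalEquivProd (A := ℕ)).summable_iff.2 hs
    rw [Summable.tsum_sigma (by exact hs')]
    have : ∀ n : ℕ, ∑' p : Finset.HasAntidiagonal.antidiagonal n, dbl μ
        (Finset.HasAntidiagonal.sigmaAntidiagonalEquivProd ⟨n, p⟩) = if n = 0 then 1 else 0 := by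
      intro n
      rw [← dbl_antidiag μ n, tsum_fintype]
      exact Finset.sum_coe_sort (Finset.HasAntidiagonal.antidiagonal n) (dbl μ)
    simp only [this, tsum_ite_eq]
  rw [← e1, e2]

lemma full_case (μ : ℝ) (h0 : 0 < μ) (h1 : μ < 1) :
    Fgen (μ * Real.exp (-μ)) * Real.exp (-μ) = 1 := by
  have hA : AnalyticOnNhd ℝ (fun μ : ℝ => Fgen (μ * Real.exp (-μ)) * Real.exp (-μ))
      (Set.Ioo 0 1) := by
    intro x hx
    have hF := Fgen_analytic (x * Real.exp (-x)) (mul_nonneg hx.1.le (Real.exp_pos _).le)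
      (mul_exp_lt x hx.2.ne)
    have hE : AnalyticAt ℝ (fun y : ℝ => Real.exp (-y)) x := by fun_prop
    have hG : AnalyticAt ℝ (fun y : ℝ => y * Real.exp (-y)) x := by fun_prop
    exact (AnalyticAt.comp (f := fun y : ℝ => y * Real.exp (-y)) hF hG).mul hE
  have hB : AnalyticOnNhd ℝ (fun _ : ℝ => (1 : ℝ)) (Set.Ioo 0 1) := fun x _ => analyticAt_const
  refine hA.eqOn_of_preconnected_of_eventuallyEq hB isPreconnected_Ioo
    (z₀ := 1 / 20) (by norm_num) ?_ ⟨h0, h1⟩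
  filter_upwards [Ioo_mem_nhds (show (0 : ℝ) < 1 / 20 by norm_num)
    (show (1 / 20 : ℝ) < 1 / 10 by norm_num)] with y hy
  exact small_case y hy.1 hy.2

lemma f_one_eq (c : ℝ) : f 1 c = Fgen (c * Real.exp (-c)) * Real.exp (-c) := by
  unfold f
  rw [Fgen, ← tsum_mul_right]
  refine tsum_congr fun k => ?_
  have : Real.exp (-c * ((k : ℝ) * 1 + 1) / 1) = Real.exp (-c) ^ k * Real.exp (-c) := by
    rw [← Real.exp_nat_mul, ← Real.exp_add]; congr 1; ring
  rw [this, aco, mul_pow]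
  simp only [mul_one, one_pow, one_mul]
  ring

lemma root_eq (c : ℝ) (hc : 1 < c) (z : ℝ) (hz : z ∈ Set.Ioo (0 : ℝ) 1)
    (h : z = Real.exp (-c * (1 - z))) : z = f 1 c := by
  have hc0 : 0 < c := by linarith
  have hlog : Real.log z = -c * (1 - z) := by
    conv_lhs => rw [h]
    exact Real.log_exp _
  have hcz : c * z < 1 := by
    have h1 : 1 < z⁻¹ := (one_lt_inv₀ hz.1).2 hz.2
    have := Real.log_lt_sub_one_of_pos (inv_pos.2 hz.1) h1.ne'
    rw [Real.log_inv, hlog] at this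
    have h2 : c * (1 - z) * z < (z⁻¹ - 1) * z := by
      apply mul_lt_mul_of_pos_right _ hz.1
      linarith
    rw [sub_mul, inv_mul_cancel₀ hz.1.ne'] at h2
    have h3 : 0 < 1 - z := by linarith [hz.2]
    by_contra hcon
    push Not at hcon
    nlinarith
  have hfull := full_case (c * z) (mul_pos hc0 hz.1) hcz
  have hx : c * z * Real.exp (-(c * z)) = c * Real.exp (-c) := by
    conv_lhs => rw [mul_assoc]; enter [2, 1]; rw [h]
    rw [← Real.exp_add]
    congr 2; ring
  rw [hx] at hfull
  rw [f_one_eq]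
  have hE : Real.exp (-c) = z * Real.exp (-(c * z)) := by
    conv_rhs => enter [1]; rw [h]
    rw [← Real.exp_add]
    congr 1; ring
  calc z = z * (Fgen (c * Real.exp (-c)) * Real.exp (-(c * z))) := by rw [hfull, mul_one]
    _ = Fgen (c * Real.exp (-c)) * (z * Real.exp (-(c * z))) := by ring
    _ = _ := by rw [← hE]

lemma root_exists (c : ℝ) (hc : 1 < c) :
    ∃ z ∈ Set.Ioo (0 : ℝ) 1, z = Real.exp (-c * (1 - z)) := by
  have hc0 : 0 < c := by linarith
  have hcont : ContinuousOn (fun z : ℝ => Real.exp (-c * (1 - z)) - z) (Set.Icc 0 (1 / c)) := by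
    fun_prop
  have hneg : Real.exp (-c * (1 - 1 / c)) - 1 / c < 0 := by
    have h1 := Real.add_one_lt_exp (x := c - 1) (sub_pos.2 hc).ne'
    have h2 : -c * (1 - 1 / c) = -(c - 1) := by field_simp
    rw [h2, Real.exp_neg, sub_neg, one_div]
    apply inv_strictAnti₀ hc0
    linarith
  obtain ⟨z, hz, hz0⟩ := intermediate_value_Ioo' (by positivity : (0 : ℝ) ≤ 1 / c) hcont
    (show (0 : ℝ) ∈ Set.Ioo _ _ from ⟨hneg, by simpa using Real.exp_pos _⟩)
  refine ⟨z, ⟨hz.1, hz.2.trans ?_⟩, ?_⟩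
  · rw [div_lt_one hc0]; exact hc
  · simp only at hz0; linarith

theorem f_one_supercritical (c : ℝ) (hc : 1 < c) :
    f 1 c ∈ Set.Ioo (0 : ℝ) 1 ∧
      f 1 c = Real.exp (-c * (1 - f 1 c)) ∧
      ∀ z ∈ Set.Ioo (0 : ℝ) 1, z = Real.exp (-c * (1 - z)) → z = f 1 c := by
  obtain ⟨z, hz, h⟩ := root_exists c hc
  have hzf := root_eq c hc z hz h
  rw [← hzf]
  exact ⟨hz, h, fun w hw hw2 => (root_eq c hc w hw hw2).trans hzf.symm⟩
end

section
/- For any positive integers m and n, the number of rooted forests on the vertex set {1,…,n} whose edges are colored with m colors equals (mn+1)^{n-1}. Concretely: the number of pairs (F, χ) where F is a forest (acyclic graph) on {1,…,n} together with a choice of one root vertex in each connected component, and χ assigns to each edge of F one of m colors, equals (mn+1)^{n-1}. -/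
/-- A rooted `m`-forest on the vertex set `Fin n`: an acyclic simple graph together with a
choice of one root vertex in each connected component, and an assignment of one of `m`
colors to each edge. -/
structure RootedMForest (n m : ℕ) where
  /-- the underlying simple graph -/
  graph : SimpleGraph (Fin n)
  /-- the graph is a forest, i.e. acyclic -/
  acyclic : graph.IsAcyclic
  /-- a choice of root vertex for each connected component -/
  root : graph.ConnectedComponent → Fin n
  /-- the chosen root belongs to its component -/
  root_mem : ∀ C : graph.ConnectedComponent, graph.connectedComponentMk (root C) = C
  /-- each edge is assigned one of `m` colors -/
  edgeColor : graph.edgeSet → Fin m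


namespace RMF
open Finset

/-- acyclicity of a colored parent function, via a rank function -/
def Acyc {V A M : Type} (f : V → A ⊕ (V × M)) : Prop :=
  ∃ r : V → ℕ, ∀ v u c, f v = Sum.inr (u, c) → r u < r v

open Classical in
/-- the vertices sent to `A` -/
noncomputable def roots {V A M : Type} [Fintype V] (f : V → A ⊕ (V × M)) : Finset V :=
  univ.filter (fun v => (f v).isLeft = true)

/-- number of acyclic functions -/
noncomputable def F (V A M : Type) : ℕ := Nat.card {f : V → A ⊕ (V × M) // Acyc f}

/-- forget the position of a parent -/
def fg {V M : Type} {S : Finset V} :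
    ({v // v ∈ S} × M) ⊕ ({v // v ∉ S} × M) → V × M
  | Sum.inl (s, c) => (s.1, c)
  | Sum.inr (s, c) => (s.1, c)

lemma fg_inj {V M : Type} {S : Finset V} : Function.Injective (fg (M := M) (S := S)) := by
  rintro (⟨⟨a, ha⟩, c⟩ | ⟨⟨a, ha⟩, c⟩) (⟨⟨b, hb⟩, d⟩ | ⟨⟨b, hb⟩, d⟩) h <;>
    simp only [fg, Prod.mk.injEq] at h <;> obtain ⟨rfl, rfl⟩ := h <;> first | rfl | contradiction

open Classical in
/-- gluing -/
noncomputable def glue {V A M : Type} (S : Finset V) (h : {v // v ∈ S} → A)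
    (g : {v // v ∉ S} → ({v // v ∈ S} × M) ⊕ ({v // v ∉ S} × M)) (v : V) : A ⊕ (V × M) :=
  if hv : v ∈ S then Sum.inl (h ⟨v, hv⟩) else Sum.inr (fg (g ⟨v, hv⟩))

lemma glue_roots {V A M : Type} [Fintype V] (S : Finset V) (h : {v // v ∈ S} → A)
    (g : {v // v ∉ S} → ({v // v ∈ S} × M) ⊕ ({v // v ∉ S} × M)) : roots (glue S h g) = S := by
  ext v
  rw [roots, Finset.mem_filter]
  by_cases hv : v ∈ S <;> simp [glue, hv]

lemma glue_acyc {V A M : Type} (S : Finset V) (h : {v // v ∈ S} → A)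
    (g : {v // v ∉ S} → ({v // v ∈ S} × M) ⊕ ({v // v ∉ S} × M)) (hg : Acyc g) :
    Acyc (glue S h g) := by
  classical
  obtain ⟨r, hr⟩ := hg
  refine ⟨fun v => if hv : v ∈ S then 0 else r ⟨v, hv⟩ + 1, ?_⟩
  intro v u c hf
  by_cases hv : v ∈ S
  · simp [glue, hv] at hf
  · simp only [glue, hv, dite_false, Sum.inr.injEq] at hf
    rcases hgv : g ⟨v, hv⟩ with ⟨⟨a, ha⟩, d⟩ | ⟨⟨a, ha⟩, d⟩
    · rw [hgv] at hf
      simp only [fg, Prod.mk.injEq] at hf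
      obtain ⟨rfl, rfl⟩ := hf
      simp [hv, ha]
    · have := hr _ _ _ hgv
      rw [hgv] at hf
      simp only [fg, Prod.mk.injEq] at hf
      obtain ⟨rfl, rfl⟩ := hf
      simp [hv, ha, this]

lemma card_fiber {V A M : Type} [Fintype V] [Finite A] [Finite M] (S : Finset V) :
    Nat.card {f : {f : V → A ⊕ (V × M) // Acyc f} // roots f.1 = S} =
      Nat.card A ^ S.card * F {v // v ∉ S} ({v // v ∈ S} × M) M := by
  have : Nat.card ({v // v ∈ S} → A) = Nat.card A ^ S.card := by
    rw [Nat.card_fun]; simp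
  rw [← this, F, ← Nat.card_prod]
  symm
  refine Nat.card_eq_of_bijective
    (fun p => ⟨⟨glue S p.1 p.2.1, glue_acyc _ _ _ p.2.2⟩, glue_roots _ _ _⟩) ⟨?_, ?_⟩
  · rintro ⟨h, g, hg⟩ ⟨h', g', hg'⟩ heq
    simp only [Subtype.mk.injEq] at heq
    have h1 : h = h' := by
      ext ⟨v, hv⟩
      have := congrFun heq v
      simpa [glue, hv] using this
    have h2 : g = g' := by
      ext1 ⟨v, hv⟩
      have := congrFun heq v
      simp only [glue, hv, dite_false, Sum.inr.injEq] at this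
      exact fg_inj this
    subst h1 h2
    rfl
  · rintro ⟨⟨f, hf⟩, rfl⟩
    have hL : ∀ v : {v // v ∈ roots f}, ∃ a, f v.1 = Sum.inl a := by
      rintro ⟨v, hv⟩
      simpa [roots, Sum.isLeft_iff] using hv
    have hR : ∀ v : {v // v ∉ roots f}, ∃ y : ({v // v ∈ roots f} × M) ⊕ ({v // v ∉ roots f} × M),
        f v.1 = Sum.inr (fg y) := by
      rintro ⟨v, hv⟩
      have : (f v).isRight := by simpa [roots] using hv
      obtain ⟨⟨u, c⟩, hu⟩ := Sum.isRight_iff.1 this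
      by_cases h : u ∈ roots f
      · exact ⟨Sum.inl (⟨u, h⟩, c), hu⟩
      · exact ⟨Sum.inr (⟨u, h⟩, c), hu⟩
    choose h hh using hL
    choose g hg using hR
    refine ⟨⟨h, ⟨g, ?_⟩⟩, ?_⟩
    · obtain ⟨r, hr⟩ := hf
      refine ⟨fun v => r v.1, ?_⟩
      intro v u c hvu
      apply hr _ _ c
      rw [hg, hvu]
      rfl
    · simp only [Subtype.mk.injEq]
      funext v
      by_cases hv : v ∈ roots f
      · simp [glue, hv, hh ⟨v, hv⟩]
      · simp [glue, hv, hg ⟨v, hv⟩]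

lemma F_empty (V A M : Type) [IsEmpty V] : F V A M = 1 := by
  have : Unique {f : V → A ⊕ (V × M) // Acyc f} :=
    { default := ⟨fun v => isEmptyElim v, ⟨fun _ => 0, fun v => isEmptyElim v⟩⟩
      uniq := fun f => Subtype.ext (funext fun v => isEmptyElim v) }
  exact Nat.card_unique

lemma fiber_empty {V A M : Type} [Fintype V] [Nonempty V] :
    Nat.card {f : {f : V → A ⊕ (V × M) // Acyc f} // roots f.1 = ∅} = 0 := by
  have : IsEmpty {f : {f : V → A ⊕ (V × M) // Acyc f} // roots f.1 = ∅} := by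
    constructor
    rintro ⟨⟨f, r, hr⟩, hf⟩
    obtain ⟨v, hv⟩ := Finite.exists_min r
    have h : v ∉ roots f := by simp only [hf]; simp
    have : (f v).isRight := by simpa [roots] using h
    obtain ⟨⟨u, c⟩, hu⟩ := Sum.isRight_iff.1 this
    have := hr _ _ _ hu
    have := hv u
    omega
  exact Nat.card_of_isEmpty

lemma binom_id (a b N : ℕ) :
    ∑ k ∈ range (N + 2), (N + 1).choose k * (k * a ^ k * b ^ (N + 1 - k)) =
      (N + 1) * (a * (a + b) ^ N) := by
  rw [Finset.sum_range_succ', add_pow, Finset.mul_sum, Finset.mul_sum]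
  simp only [zero_mul, mul_zero, add_zero]
  apply Finset.sum_congr rfl
  intro k hk
  have := Nat.add_one_mul_choose_eq N k
  have h2 : N + 1 - (k + 1) = N - k := by omega
  rw [h2, pow_succ, Nat.cast_id]
  calc _ = ((N + 1).choose (k + 1) * (k + 1)) * (a ^ k * a * b ^ (N - k)) := by ring
    _ = _ := by rw [← this]; ring

lemma F_sum (V A M : Type) [Fintype V] [Finite A] [Finite M] :
    F V A M = ∑ S : Finset V, Nat.card {f : {f : V → A ⊕ (V × M) // Acyc f} // roots f.1 = S} := by
  classical
  rw [F, ← Nat.card_sigma]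
  exact Nat.card_congr (Equiv.sigmaFiberEquiv _).symm

lemma F_main (M : Type) [Finite M] [Nonempty M] (n : ℕ) : ∀ (V A : Type) [Fintype V] [Finite A],
    Fintype.card V = n → (n = 0 → F V A M = 1) ∧
      (n ≠ 0 → F V A M = Nat.card A * (Nat.card A + Nat.card M * n) ^ (n - 1)) := by
  induction n using Nat.strong_induction_on with
  | _ n ih =>
  intro V A _ _ hV
  refine ⟨fun h0 => ?_, fun h0 => ?_⟩
  · have : IsEmpty V := Fintype.card_eq_zero_iff.1 (hV.trans h0)
    exact F_empty V A M
  have hne : Nonempty V := Fintype.card_pos_iff.1 (by omega)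
  set m := Nat.card M with hm
  have hmpos : 0 < m := Nat.card_pos
  set a := Nat.card A with ha
  have key : ∀ S : Finset V,
      n * Nat.card {f : {f : V → A ⊕ (V × M) // Acyc f} // roots f.1 = S} =
        S.card * a ^ S.card * (m * n) ^ (n - S.card) := by
    classical
    intro S
    rcases S.eq_empty_or_nonempty with rfl | hS
    · rw [fiber_empty]; simp
    rw [card_fiber]
    have hc : Fintype.card {v // v ∉ S} = n - S.card := by
      rw [Fintype.card_subtype_compl, hV]; simp
    have hSp : 0 < S.card := hS.card_pos
    have hSn : S.card ≤ n := hV ▸ Finset.card_le_univ S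
    obtain ⟨i1, i2⟩ := ih (n - S.card) (by omega) {v // v ∉ S} ({v // v ∈ S} × M) hc
    by_cases hz : n - S.card = 0
    · rw [i1 hz, hz]
      have : S.card = n := by omega
      rw [this]; ring
    · rw [i2 hz]
      have hk : Nat.card ({v // v ∈ S} × M) = m * S.card := by
        rw [Nat.card_prod]; simp [hm, mul_comm]
      rw [hk, ← mul_add, Nat.add_sub_cancel' hSn]
      obtain ⟨d, hd⟩ := Nat.exists_eq_succ_of_ne_zero hz
      rw [hd, Nat.succ_sub_one, Nat.succ_eq_add_one, pow_succ]
      ring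
  obtain ⟨N, rfl⟩ := Nat.exists_eq_succ_of_ne_zero h0
  apply Nat.eq_of_mul_eq_mul_left (Nat.succ_pos N)
  rw [F_sum, Finset.mul_sum, Finset.sum_congr rfl (fun S _ => key S), ← Finset.powerset_univ,
    Finset.sum_powerset_apply_card (fun k => k * a ^ k * (m * N.succ) ^ (N.succ - k))]
  rw [Finset.card_univ, hV]
  simp only [smul_eq_mul]
  exact binom_id a (m * (N + 1)) N

end RMF

namespace RMF

/-- the parent function encodes the forest -/
def Enc {n m : ℕ} (G : RootedMForest n m) (f : Fin n → Unit ⊕ (Fin n × Fin m)) : Prop :=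
  (∀ v, f v = Sum.inl () ↔ G.root (G.graph.connectedComponentMk v) = v) ∧
  (∀ u v, G.graph.Adj u v ↔ ∃ c, f u = Sum.inr (v, c) ∨ f v = Sum.inr (u, c)) ∧
  (∀ u v c (h : G.graph.Adj u v), f u = Sum.inr (v, c) → G.edgeColor ⟨s(u, v), h⟩ = c)

lemma enc_right_unique {n m : ℕ} {G : RootedMForest n m} {f f' : Fin n → Unit ⊕ (Fin n × Fin m)}
    (hf : Acyc f) (h : Enc G f) (h' : Enc G f') : f = f' := by
  obtain ⟨r, hr⟩ := hf
  obtain ⟨a1, a2, a3⟩ := h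
  obtain ⟨b1, b2, b3⟩ := h'
  have : ∀ k v, r v = k → f v = f' v := by
    intro k
    induction k using Nat.strong_induction_on with
    | _ k ih =>
    rintro v rfl
    rcases hv : f v with ⟨⟩ | ⟨u, c⟩
    · exact ((b1 v).2 ((a1 v).1 hv)).symm
    have hadj : G.graph.Adj v u := (a2 v u).2 ⟨c, Or.inl hv⟩
    have hu := ih _ (hr _ _ _ hv) u rfl
    obtain ⟨d, hd | hd⟩ := (b2 v u).1 hadj
    · rw [hd, ← a3 _ _ _ hadj hv, ← b3 _ _ _ hadj hd]
    · rw [hd] at hu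
      have := hr _ _ _ hu
      have := hr _ _ _ hv
      omega
  funext v
  exact this _ v rfl

lemma enc_left_unique {n m : ℕ} {G G' : RootedMForest n m} {f : Fin n → Unit ⊕ (Fin n × Fin m)}
    (h : Enc G f) (h' : Enc G' f) : G = G' := by
  obtain ⟨g, ac, rt, rm, col⟩ := G
  obtain ⟨g', ac', rt', rm', col'⟩ := G'
  obtain ⟨a1, a2, a3⟩ := h
  obtain ⟨b1, b2, b3⟩ := h'
  simp only at a1 a2 a3 b1 b2 b3
  have : g = g' := by
    ext u v
    rw [a2, b2]
  subst this
  have : rt = rt' := by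
    funext C
    have h1 := (a1 (rt C)).2 (by rw [rm])
    have h2 := (b1 _).1 h1
    rw [rm] at h2
    exact h2.symm
  subst this
  have : col = col' := by
    funext ⟨e, he⟩
    induction e using Sym2.ind with
    | _ u v =>
    have hadj : g.Adj u v := he
    obtain ⟨c, hc | hc⟩ := (a2 u v).1 hadj
    · rw [a3 u v c hadj hc, b3 u v c hadj hc]
    · have e1 := a3 v u c hadj.symm hc
      have e2 := b3 v u c hadj.symm hc
      have e3 : (⟨s(u, v), he⟩ : g.edgeSet) = ⟨s(v, u), hadj.symm⟩ := Subtype.ext Sym2.eq_swap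
      rw [e3, e1, e2]
  subst this
  rfl

/-- `u` is the parent of `v` -/
def Par {n m : ℕ} (G : RootedMForest n m) (v u : Fin n) : Prop :=
  ∃ (h : G.graph.Adj v u) (r : Fin n) (w : G.graph.Walk u r),
    G.root (G.graph.connectedComponentMk v) = r ∧ (SimpleGraph.Walk.cons h w).IsPath

lemma exists_path {n m : ℕ} (G : RootedMForest n m) (v : Fin n) :
    ∃ (r : Fin n) (w : G.graph.Walk v r),
      G.root (G.graph.connectedComponentMk v) = r ∧ w.IsPath := by
  classical
  have := G.root_mem (G.graph.connectedComponentMk v)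
  obtain ⟨w⟩ := (SimpleGraph.ConnectedComponent.exact this).symm
  exact ⟨_, w.bypass, rfl, w.bypass_isPath⟩

lemma path_eq {V : Type} {g : SimpleGraph V} (hg : g.IsAcyclic) {u v : V}
    (p q : g.Walk u v) (hp : p.IsPath) (hq : q.IsPath) : p = q :=
  congrArg Subtype.val ((hg.subsingleton_path u v).elim ⟨p, hp⟩ ⟨q, hq⟩)

lemma par_unique {n m : ℕ} {G : RootedMForest n m} {v u u' : Fin n}
    (h : Par G v u) (h' : Par G v u') : u = u' := by
  obtain ⟨h, r, w, hr, hw⟩ := h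
  obtain ⟨h', r', w', hr', hw'⟩ := h'
  subst hr
  subst hr'
  have := path_eq G.acyclic _ _ hw hw'
  injection this

lemma par_of_adj {n m : ℕ} {G : RootedMForest n m} {v u : Fin n}
    (h : G.graph.Adj u v) : Par G u v ∨ Par G v u := by
  classical
  obtain ⟨r, w, hr, hw⟩ := exists_path G u
  have hc : G.graph.connectedComponentMk u = G.graph.connectedComponentMk v :=
    SimpleGraph.ConnectedComponent.sound h.reachable
  by_cases hv : v ∈ w.support
  · left
    refine ⟨h, r, w.dropUntil v hv, hr, ?_⟩
    rw [SimpleGraph.Walk.cons_isPath_iff]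
    refine ⟨hw.dropUntil hv, fun hu => ?_⟩
    have hsp := w.take_spec hv
    have hn := hw.support_nodup
    rw [← hsp, SimpleGraph.Walk.support_append, List.nodup_append] at hn
    rw [SimpleGraph.Walk.mem_support_iff] at hu
    rcases hu with hu | hu
    · exact h.ne hu
    · exact hn.2.2 u (by simp) u hu rfl
  · right
    exact ⟨h.symm, r, w, by rw [← hc, hr], hw.cons hv⟩

lemma par_iff {n m : ℕ} {G : RootedMForest n m} {v : Fin n} :
    (¬ ∃ u, Par G v u) ↔ G.root (G.graph.connectedComponentMk v) = v := by
  constructor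
  · intro hn
    obtain ⟨r, w, hr, hw⟩ := exists_path G v
    cases w with
    | nil => exact hr
    | cons h w => exact absurd ⟨_, h, r, w, hr, hw⟩ hn
  · rintro h ⟨u, hadj, r, w, hr, hw⟩
    rw [h] at hr
    subst hr
    rw [SimpleGraph.Walk.cons_isPath_iff] at hw
    exact hw.2 w.end_mem_support

lemma par_rank {n m : ℕ} (G : RootedMForest n m) :
    ∃ r : Fin n → ℕ, ∀ v u, Par G v u → r u < r v := by
  choose r w hr hw using exists_path G
  refine ⟨fun v => (w v).length, ?_⟩
  rintro v u ⟨h, s, w', hs, hw'⟩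
  have hc : G.graph.connectedComponentMk v = G.graph.connectedComponentMk u :=
    SimpleGraph.ConnectedComponent.sound h.reachable
  have e1 : r v = s := by rw [← hs, hr]
  have e2 : r u = s := by rw [← hs, ← hr, hc]
  have p1 := path_eq G.acyclic ((w v).copy rfl e1) _ (by simpa using hw v) hw'
  have p2 := path_eq G.acyclic ((w u).copy rfl e2) w' (by simpa using hw u) hw'.of_cons
  have q1 := congrArg SimpleGraph.Walk.length p1
  have q2 := congrArg SimpleGraph.Walk.length p2
  simp at q1 q2
  simp only
  omega

lemma exists_fun {n m : ℕ} (G : RootedMForest n m) :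
    ∃ f : Fin n → Unit ⊕ (Fin n × Fin m), Acyc f ∧ Enc G f := by
  have H : ∀ v, ∃ x : Unit ⊕ (Fin n × Fin m), (x = Sum.inl () ↔ ¬ ∃ u, Par G v u) ∧
      ∀ u, Par G v u → ∃ h : G.graph.Adj v u, x = Sum.inr (u, G.edgeColor ⟨s(v, u), h⟩) := by
    intro v
    by_cases h : ∃ u, Par G v u
    · obtain ⟨u, hu⟩ := h
      refine ⟨Sum.inr (u, G.edgeColor ⟨s(v, u), hu.1⟩), ?_, ?_⟩
      · simpa using ⟨u, hu⟩
      · intro u' hu'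
        obtain rfl := par_unique hu hu'
        exact ⟨hu.1, rfl⟩
    · exact ⟨Sum.inl (), by simpa using h, fun u hu => absurd ⟨u, hu⟩ h⟩
  choose f hf1 hf2 using H
  have hf3 : ∀ v u c, f v = Sum.inr (u, c) →
      Par G v u ∧ ∃ h : G.graph.Adj v u, c = G.edgeColor ⟨s(v, u), h⟩ := by
    intro v u c h
    have : ∃ u, Par G v u := by
      by_contra hn
      rw [(hf1 v).2 hn] at h
      cases h
    obtain ⟨u', hu'⟩ := this
    obtain ⟨hadj, e⟩ := hf2 v u' hu'
    rw [h] at e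
    simp only [Sum.inr.injEq, Prod.mk.injEq] at e
    obtain ⟨rfl, e⟩ := e
    exact ⟨hu', hadj, e⟩
  obtain ⟨r, hr⟩ := par_rank G
  refine ⟨f, ⟨r, fun v u c h => hr v u (hf3 v u c h).1⟩, ?_, ?_, ?_⟩
  · intro v
    rw [hf1, par_iff]
  · intro u v
    constructor
    · intro h
      rcases par_of_adj h with h | h
      · obtain ⟨_, e⟩ := hf2 _ _ h
        exact ⟨_, Or.inl e⟩
      · obtain ⟨_, e⟩ := hf2 _ _ h
        exact ⟨_, Or.inr e⟩
    · rintro ⟨c, h | h⟩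
      · exact (hf3 _ _ _ h).1.1
      · exact (hf3 _ _ _ h).1.1.symm
  · intro u v c h e
    obtain ⟨_, _, e⟩ := hf3 _ _ _ e
    exact e.symm

lemma exists_rho {V M : Type} (f : V → Unit ⊕ (V × M)) (hf : Acyc f) :
    ∃ ρ : V → V, (∀ v, f v = Sum.inl () → ρ v = v) ∧
      (∀ v u c, f v = Sum.inr (u, c) → ρ v = ρ u) ∧ ∀ v, f (ρ v) = Sum.inl () := by
  classical
  obtain ⟨r, hr⟩ := hf
  let g : V → V := fun v => Sum.elim (fun _ => v) (fun p => p.1) (f v)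
  have g1 : ∀ v, f v = Sum.inl () → g v = v := fun v h => by simp [g, h]
  have g2 : ∀ v u c, f v = Sum.inr (u, c) → g v = u := fun v u c h => by simp [g, h]
  have it : ∀ v, f v = Sum.inl () → ∀ k, g^[k] v = v := fun v h k =>
    Function.iterate_fixed (g1 v h) k
  have e : ∀ k v, r v ≤ k → f (g^[k] v) = Sum.inl () := by
    intro k
    induction k with
    | zero =>
      intro v hv
      rcases h : f v with ⟨⟩ | ⟨u, c⟩
      · exact h
      · have := hr _ _ _ h
        omega
    | succ k ih =>
      intro v hv
      rcases h : f v with ⟨⟩ | ⟨u, c⟩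
      · rw [it v h, h]
      · rw [Function.iterate_succ_apply, g2 _ _ _ h]
        apply ih
        have := hr _ _ _ h
        omega
  have st : ∀ v k, r v ≤ k → g^[k] v = g^[r v] v := by
    intro v k hk
    obtain ⟨d, rfl⟩ := Nat.exists_eq_add_of_le' hk
    rw [Function.iterate_add_apply, it _ (e _ v le_rfl)]
  refine ⟨fun v => g^[r v] v, fun v h => it v h _, ?_, fun v => e _ v le_rfl⟩
  intro v u c h
  have := hr _ _ _ h
  simp only
  rw [← st v (r v + 1) (by omega), Function.iterate_succ_apply, g2 _ _ _ h, st u _ (by omega)]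

lemma exists_forest {n m : ℕ} (f : Fin n → Unit ⊕ (Fin n × Fin m)) (hf : Acyc f) :
    ∃ G : RootedMForest n m, Enc G f := by
  obtain ⟨ρ, h1, h2, h3⟩ := exists_rho f hf
  obtain ⟨r, hr⟩ := hf
  let g : SimpleGraph (Fin n) :=
    { Adj := fun u v => ∃ c, f u = Sum.inr (v, c) ∨ f v = Sum.inr (u, c)
      symm := ⟨fun u v ⟨c, h⟩ => ⟨c, h.symm⟩⟩
      loopless := ⟨fun u ⟨c, h⟩ => by
        rcases h with h | h <;> exact lt_irrefl _ (hr _ _ _ h)⟩ }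
  have gadj : ∀ u v, g.Adj u v ↔ ∃ c, f u = Sum.inr (v, c) ∨ f v = Sum.inr (u, c) :=
    fun u v => Iff.rfl
  have nb : ∀ v u c, f v = Sum.inr (u, c) → ¬ (g.deleteEdges {s(v, u)}).Reachable v u := by
    rintro v u c hvu ⟨w⟩
    let D : Fin n → Prop := fun x => Relation.ReflTransGen (fun x y => ∃ c, f x = Sum.inr (y, c)) x v
    have hD : ∀ x y, (g.deleteEdges {s(v, u)}).Walk x y → D x → D y := by
      intro x y w
      induction w with
      | nil => exact id
      | cons h w ih =>
        rename_i a b y'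
        intro ha
        apply ih
        rw [SimpleGraph.deleteEdges_adj] at h
        obtain ⟨⟨d, hd | hd⟩, hne⟩ := h
        · rcases Relation.ReflTransGen.cases_head ha with rfl | ⟨z, ⟨c', hz⟩, hzv⟩
          · rw [hd] at hvu
            simp only [Sum.inr.injEq, Prod.mk.injEq] at hvu
            exact absurd (by simp [hvu.1]) hne
          · rw [hd] at hz
            simp only [Sum.inr.injEq, Prod.mk.injEq] at hz
            rw [hz.1]
            exact hzv
        · exact Relation.ReflTransGen.head ⟨d, hd⟩ ha
    have hu : D u := hD _ _ w Relation.ReflTransGen.refl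
    have hrk : ∀ x, D x → r v ≤ r x := by
      intro x hx
      induction hx using Relation.ReflTransGen.head_induction_on with
      | refl => exact le_rfl
      | head h _ ih =>
        obtain ⟨c, h⟩ := h
        have := hr _ _ _ h
        omega
    have := hrk u hu
    have := hr _ _ _ hvu
    omega
  have hac : g.IsAcyclic := by
    rw [SimpleGraph.isAcyclic_iff_forall_adj_isBridge]
    intro u v huv
    rw [SimpleGraph.isBridge_iff]
    obtain ⟨c, h | h⟩ := huv
    · exact nb _ _ _ h
    · intro hh
      rw [Sym2.eq_swap] at hh
      exact nb _ _ _ h hh.symm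
  have hρ : ∀ u v, g.Walk u v → ρ u = ρ v := by
    intro u v w
    induction w with
    | nil => rfl
    | cons h w ih =>
      rw [← ih]
      obtain ⟨c, h | h⟩ := h
      · exact h2 _ _ _ h
      · exact (h2 _ _ _ h).symm
  have hreach : ∀ k v, r v = k → g.Reachable (ρ v) v := by
    intro k
    induction k using Nat.strong_induction_on with
    | _ k ih =>
    rintro v rfl
    rcases hv : f v with ⟨⟩ | ⟨u, c⟩
    · rw [h1 v hv]
    · rw [h2 _ _ _ hv]
      have ha : g.Adj u v := ⟨c, Or.inr hv⟩
      exact (ih _ (hr _ _ _ hv) u rfl).trans ha.reachable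
  have hcol : ∀ e : g.edgeSet, ∃ c, ∀ u v c', e.1 = s(u, v) → f u = Sum.inr (v, c') → c = c' := by
    have base : ∀ u v c, f u = Sum.inr (v, c) → ∀ u' v' c', s(u, v) = s(u', v') →
        f u' = Sum.inr (v', c') → c = c' := by
      intro u v c h u' v' c' he h'
      rw [Sym2.eq_iff] at he
      rcases he with ⟨rfl, rfl⟩ | ⟨rfl, rfl⟩
      · rw [h] at h'
        simpa using h'
      · have := hr _ _ _ h
        have := hr _ _ _ h'
        omega
    rintro ⟨e, he⟩
    induction e using Sym2.ind with
    | _ u v =>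
    obtain ⟨c, h | h⟩ := he
    · exact ⟨c, base _ _ _ h⟩
    · refine ⟨c, fun u' v' c' he => base _ _ _ h u' v' c' ?_⟩
      rw [← he, Sym2.eq_swap]
  choose col hcol using hcol
  refine ⟨⟨g, hac, fun C => ρ (Quot.out C), ?_, col⟩, ?_, gadj, ?_⟩
  · intro C
    conv_rhs => rw [← Quot.out_eq C]
    exact SimpleGraph.ConnectedComponent.sound (hreach _ _ rfl)
  · intro v
    have : ρ (Quot.out (g.connectedComponentMk v)) = ρ v := by
      have : g.connectedComponentMk (Quot.out (g.connectedComponentMk v)) =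
        g.connectedComponentMk v := Quot.out_eq _
      obtain ⟨w⟩ := SimpleGraph.ConnectedComponent.exact this
      exact hρ _ _ w
    simp only
    rw [this]
    exact ⟨h1 v, fun h => h ▸ h3 v⟩
  · intro u v c h e
    exact hcol _ u v c rfl e

lemma card_forest (n m : ℕ) : Nat.card (RootedMForest n m) = F (Fin n) Unit (Fin m) := by
  choose f hf he using exists_fun (n := n) (m := m)
  refine Nat.card_eq_of_bijective (fun G => ⟨f G, hf G⟩) ⟨?_, ?_⟩
  · intro G G' h
    simp only [Subtype.mk.injEq] at h
    have := he G'
    rw [← h] at this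
    exact enc_left_unique (he G) this
  · rintro ⟨f', hf'⟩
    obtain ⟨G, hG⟩ := exists_forest f' hf'
    exact ⟨G, Subtype.ext (enc_right_unique (hf G) (he G) hG)⟩

end RMF

theorem card_rootedMForest (m n : ℕ) (hm : 0 < m) (hn : 0 < n) :
    Nat.card (RootedMForest n m) = (m * n + 1) ^ (n - 1) := by
  have : Nonempty (Fin m) := ⟨⟨0, hm⟩⟩
  rw [RMF.card_forest, (RMF.F_main (Fin m) n (Fin n) Unit (by simp)).2 hn.ne']
  simp [add_comm]
end

section
/- For any positive integers n, p, and q, the number of rooted (p,q)-forests on {1,…,n} equals q(q+np)^{n-1}. Concretely: the number of triples (F, χ, ρ) where F is a forest on {1,…,n} with a distinguished root in each connected component, χ assigns to each edge of F one of p colors, and ρ assigns to each root vertex one of q colors, equals q(q+np)^{n-1}. -/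
/-- A rooted `(p,q)`-forest on the vertex set `Fin n`: an acyclic simple graph together with
a choice of one root vertex in each connected component, an assignment of one of `p` colors
to each edge, and an assignment of one of `q` colors to each root vertex (equivalently, to
each connected component, since roots are in bijection with components). -/
structure RootedPQForest (n p q : ℕ) where
  /-- the underlying simple graph -/
  graph : SimpleGraph (Fin n)
  /-- the graph is a forest, i.e. acyclic -/
  acyclic : graph.IsAcyclic
  /-- a choice of root vertex for each connected component -/
  root : graph.ConnectedComponent → Fin n
  /-- the chosen root belongs to its component -/
  root_mem : ∀ C : graph.ConnectedComponent, graph.connectedComponentMk (root C) = C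
  /-- each edge is assigned one of `p` colors -/
  edgeColor : graph.edgeSet → Fin p
  /-- each root vertex is assigned one of `q` colors -/
  rootColor : graph.ConnectedComponent → Fin q

/-- A parent map is acyclic if it admits a rank function. -/
def PMAcyc {V : Type} (g : V → Option V) : Prop :=
  ∃ r : V → ℕ, ∀ v u, g v = some u → r u < r v

def pmDown {n : ℕ} (o : Option (Fin (n + 1))) : Option (Fin n) :=
  o.bind (fun x => Fin.cases none some x)

@[simp] lemma pmDown_none {n : ℕ} : pmDown (none : Option (Fin (n + 1))) = none := rfl
@[simp] lemma pmDown_zero {n : ℕ} : pmDown (some (0 : Fin (n + 1))) = none := rfl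
@[simp] lemma pmDown_succ {n : ℕ} (i : Fin n) : pmDown (some i.succ) = some i := rfl

/-- contraction of the vertex `0` into its parent. -/
def pmContr {n : ℕ} {T : Type} (π : T → Option (Fin (n + 1))) (t s : T) : Option (Fin n) :=
  if π s = some 0 then pmDown (π t) else pmDown (π s)

lemma opt_cases {n : ℕ} (o : Option (Fin (n + 1))) :
    o = none ∨ o = some 0 ∨ ∃ i : Fin n, o = some i.succ := by
  rcases o with _ | x
  · simp
  · rcases Fin.eq_zero_or_eq_succ x with h | ⟨i, h⟩
    · simp [h]
    · exact Or.inr (Or.inr ⟨i, by rw [h]⟩)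

lemma acyc_cons {n : ℕ} {T : Type} (π : T → Option (Fin (n + 1))) (t : T) (f : Fin n → T) :
    PMAcyc (fun v => π ((Fin.cons t f : Fin (n + 1) → T) v)) ↔
      π t ≠ some 0 ∧ PMAcyc (fun v => pmContr π t (f v)) := by
  constructor
  · rintro ⟨r, hr⟩
    refine ⟨fun h => lt_irrefl _ (hr 0 0 (by simpa using h)), fun i => r i.succ, ?_⟩
    intro v u h
    have h1 := hr v.succ
    simp only [Fin.cons_succ] at h1
    have h0 := hr 0
    simp only [Fin.cons_zero] at h0
    simp only [pmContr] at h
    rcases opt_cases (π (f v)) with h2 | h2 | ⟨i, h2⟩ <;> simp [h2] at h h1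
    · rcases opt_cases (π t) with h3 | h3 | ⟨j, h3⟩ <;> simp [h3] at h h0
      subst h
      exact h0.trans h1
    · subst h
      exact h1
  · rintro ⟨ht, r, hr⟩
    refine ⟨Fin.cases ((pmDown (π t)).elim 0 (fun u => 2 * r u + 3)) (fun i => 2 * r i + 2), ?_⟩
    intro v u h
    rcases Fin.eq_zero_or_eq_succ v with rfl | ⟨v, rfl⟩
    · simp only [Fin.cons_zero] at h
      rcases Fin.eq_zero_or_eq_succ u with rfl | ⟨u, rfl⟩
      · exact absurd h ht
      · simp [h]
    · simp only [Fin.cons_succ] at h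
      have := hr v
      simp only [pmContr, h] at this
      rcases Fin.eq_zero_or_eq_succ u with rfl | ⟨u, rfl⟩
      · rcases opt_cases (π t) with h3 | h3 | ⟨j, h3⟩ <;> simp [h3] at this ⊢
        · omega
      · simp at this ⊢
        omega

lemma card_acyc (n : ℕ) (T : Type) [Fintype T] (π : T → Option (Fin n)) :
    Fintype.card T * Nat.card {f : Fin n → T // PMAcyc (fun v => π (f v))} =
      Nat.card {t // π t = none} * Fintype.card T ^ n := by
  classical
  induction n with
  | zero =>
    have h1 : Nat.card {f : Fin 0 → T // PMAcyc (fun v => π (f v))} = 1 := by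
      rw [Nat.card_eq_one_iff_unique]
      exact ⟨inferInstance, ⟨⟨Fin.elim0, fun _ => 0, fun v => v.elim0⟩⟩⟩
    have h2 : Nat.card {t // π t = none} = Fintype.card T := by
      rw [← Nat.card_eq_fintype_card]
      refine Nat.card_congr (Equiv.subtypeUnivEquiv fun t => ?_)
      rcases h : π t with _ | x
      · rfl
      · exact x.elim0
    rw [h1, h2]; simp
  | succ n ih =>
    have e : {f : Fin (n + 1) → T // PMAcyc (fun v => π (f v))} ≃
        (Σ t : T, {f : Fin n → T // π t ≠ some 0 ∧ PMAcyc (fun v => pmContr π t (f v))}) :=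
      ((Fin.consEquiv (fun _ => T)).symm.subtypeEquiv (q := fun x : T × (Fin n → T) =>
        π x.1 ≠ some 0 ∧ PMAcyc (fun v => pmContr π x.1 (x.2 v))) (by
          intro f
          rw [← acyc_cons]
          simp [Fin.consEquiv])).trans
      (Equiv.subtypeProdEquivSigmaSubtype (fun (t : T) (f : Fin n → T) =>
        π t ≠ some 0 ∧ PMAcyc (fun v => pmContr π t (f v))))
    rw [Nat.card_congr e, Nat.card_sigma, Finset.mul_sum]
    set a := Nat.card {t // π t = none} with ha
    set b := Nat.card {t // π t = some 0} with hb
    have ha' : (Finset.univ.filter (fun t => π t = none)).card = a := by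
      rw [ha, Nat.card_eq_fintype_card, Fintype.card_subtype]
    have hb' : (Finset.univ.filter (fun t => π t = some 0)).card = b := by
      rw [hb, Nat.card_eq_fintype_card, Fintype.card_subtype]
    have key : ∀ t : T, Fintype.card T * Nat.card {f : Fin n → T // π t ≠ some 0 ∧
        PMAcyc (fun v => pmContr π t (f v))} =
        if π t = some 0 then 0 else (a + if π t = none then b else 0) * Fintype.card T ^ n := by
      intro t
      split_ifs with h1 h2
      · simp [h1]
      · have := ih (pmContr π t)
        simp only [h1, ne_eq, not_false_eq_true, true_and]
        rw [this, ← ha', ← hb', Nat.card_eq_fintype_card, Fintype.card_subtype,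
          ← Finset.card_union_of_disjoint]
        · congr 2
          ext s
          rcases opt_cases (π s) with h | h | ⟨i, h⟩ <;> simp [pmContr, h, h2]
        · rw [Finset.disjoint_filter]
          intro x _ h; simp [h]
      · have := ih (pmContr π t)
        simp only [h1, ne_eq, not_false_eq_true, true_and]
        rw [this, add_zero, ← ha', Nat.card_eq_fintype_card, Fintype.card_subtype]
        congr 2
        ext s
        rcases opt_cases (π t) with h3 | h3 | ⟨j, h3⟩
        · exact absurd h3 h2
        · exact absurd h3 h1
        rcases opt_cases (π s) with h | h | ⟨i, h⟩ <;> simp [pmContr, h, h3]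
    rw [Finset.sum_congr rfl (fun t _ => key t)]
    have key2 : ∀ t : T, (if π t = some 0 then 0 else
        (a + if π t = none then b else 0) * Fintype.card T ^ n) +
        (if π t = some 0 then a * Fintype.card T ^ n else 0) = a * Fintype.card T ^ n +
        (if π t = none then b * Fintype.card T ^ n else 0) := by
      intro t
      rcases opt_cases (π t) with h3 | h3 | ⟨j, h3⟩ <;> simp [h3, add_mul]
    have key3 := Finset.sum_congr (rfl : (Finset.univ : Finset T) = _) (fun t _ => key2 t)
    rw [Finset.sum_add_distrib, Finset.sum_add_distrib, ← Finset.sum_filter (fun t => π t = some 0),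
      ← Finset.sum_filter (fun t => π t = none)] at key3
    simp only [Finset.sum_const, ha', hb', smul_eq_mul, Finset.card_univ] at key3
    rw [pow_succ]
    linarith

/-! ### graphs of parent maps -/

def pmGraph {V : Type} (g : V → Option V) (hg : PMAcyc g) : SimpleGraph V where
  Adj u v := g u = some v ∨ g v = some u
  symm := ⟨fun _ _ h => h.symm⟩
  loopless := ⟨fun v h => by
    obtain ⟨r, hr⟩ := hg
    exact lt_irrefl _ (hr v v (by simpa using h))⟩

lemma exists_rho {V : Type} [Finite V] (g : V → Option V) (r : V → ℕ)
    (hr : ∀ v u, g v = some u → r u < r v) (hg : PMAcyc g) :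
    ∃ ρ : V → V, (∀ v, g (ρ v) = none) ∧ (∀ v, g v = none → ρ v = v) ∧
      (∀ v, r (ρ v) ≤ r v) ∧ (∀ v, (pmGraph g hg).Reachable v (ρ v)) ∧
      (∀ u v, (pmGraph g hg).Reachable u v → ρ u = ρ v) := by
  classical
  have := Fintype.ofFinite V
  set h : V → V := fun v => (g v).getD v with hh
  have hnone : ∀ v, g v = none → h v = v := fun v hv => by simp [hh, hv]
  have hsome : ∀ v u, g v = some u → h v = u := fun v u hv => by simp [hh, hv]
  have fixed : ∀ k v, g v = none → h^[k] v = v := fun k v hv =>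
    Function.iterate_fixed (hnone v hv) k
  have c1 : ∀ k v, r v ≤ k → g (h^[k] v) = none := by
    intro k
    induction k with
    | zero =>
      intro v hv
      rcases e : g v with _ | u
      · simpa using e
      · have := hr v u e; omega
    | succ k ih =>
      intro v hv
      rcases e : g v with _ | u
      · rw [fixed _ _ e]; exact e
      · have := hr v u e
        rw [Function.iterate_succ_apply, hsome v u e]
        exact ih u (by omega)
  have c2 : ∀ k v, r (h^[k] v) ≤ r v ∧ (pmGraph g hg).Reachable v (h^[k] v) := by
    intro k
    induction k with
    | zero => intro v; exact ⟨le_rfl, SimpleGraph.Reachable.refl _⟩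
    | succ k ih =>
      intro v
      rcases e : g v with _ | u
      · rw [fixed _ _ e]; exact ⟨le_rfl, SimpleGraph.Reachable.refl _⟩
      · have := hr v u e
        rw [Function.iterate_succ_apply, hsome v u e]
        have ad : (pmGraph g hg).Adj v u := Or.inl e
        exact ⟨by have := (ih u).1; omega, ad.reachable.trans (ih u).2⟩
  set N := ∑ v, r v
  have hN : ∀ v, r v ≤ N := fun v => Finset.single_le_sum (f := r) (fun _ _ => Nat.zero_le _) (Finset.mem_univ v)
  have c3 : ∀ v u, g v = some u → h^[N] v = h^[N] u := by
    intro v u e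
    rw [← hsome v u e, ← Function.iterate_succ_apply, Function.iterate_succ_apply',
      hnone _ (c1 N v (hN v))]
  refine ⟨h^[N], fun v => c1 N v (hN v), fun v => fixed N v, fun v => (c2 N v).1,
    fun v => (c2 N v).2, ?_⟩
  rintro u v ⟨w⟩
  induction w with
  | nil => rfl
  | cons ha _ ih =>
    rw [← ih]
    rcases ha with ha | ha
    · exact c3 _ _ ha
    · exact (c3 _ _ ha).symm

lemma pmGraph_acyclic {V : Type} [Finite V] (g : V → Option V) (hg : PMAcyc g) :
    (pmGraph g hg).IsAcyclic := by
  classical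
  have key : ∀ v u, g v = some u → (pmGraph g hg).IsBridge s(v, u) := by
    intro v u e
    obtain ⟨r, hr⟩ := id hg
    have hr' : ∀ a b, Function.update g v none a = some b → r b < r a := by
      intro a b h
      by_cases hav : a = v
      · subst hav; simp at h
      · rw [Function.update_of_ne hav] at h; exact hr a b h
    obtain ⟨ρ, h1, h2, h3, h4, h5⟩ := exists_rho _ r hr' ⟨r, hr'⟩
    rw [SimpleGraph.isBridge_iff]
    intro hreach
    have h6 := h5 v u (hreach.mono (by
      intro a b hab
      simp only [SimpleGraph.deleteEdges_adj, Set.mem_singleton_iff] at hab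
      obtain ⟨hab, hne⟩ := hab
      rcases hab with hab | hab
      · left
        rw [Function.update_of_ne]
        · exact hab
        · rintro rfl
          rw [e] at hab
          simp_all
      · right
        rw [Function.update_of_ne]
        · exact hab
        · rintro rfl
          rw [e] at hab
          simp_all [Sym2.eq_swap]))
    rw [h2 v (by simp)] at h6
    have := h3 u
    have := hr v u e
    rw [← h6] at *
    omega
  rw [SimpleGraph.isAcyclic_iff_forall_adj_isBridge]
  rintro v u (h | h)
  · exact key v u h
  · rw [Sym2.eq_swap]; exact key u v h

/-- A rooted forest, without colours. -/
structure RF (V : Type) where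
  graph : SimpleGraph V
  acyclic : graph.IsAcyclic
  root : graph.ConnectedComponent → V
  root_mem : ∀ C : graph.ConnectedComponent, graph.connectedComponentMk (root C) = C

def Compat {V : Type} (F : RF V) (g : {g : V → Option V // PMAcyc g}) : Prop :=
  F.graph = pmGraph g.1 g.2 ∧ ∀ v, g.1 v = none ↔ F.root (F.graph.connectedComponentMk v) = v

lemma compat_exists_right {V : Type} [Finite V] (F : RF V) : ∃ g, Compat F g := by
  classical
  obtain ⟨G, hG, root, hroot⟩ := F
  set d : V → ℕ := fun v => G.dist v (root (G.connectedComponentMk v)) with hd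
  have hpar : ∀ v, root (G.connectedComponentMk v) ≠ v → ∃ u, G.Adj v u ∧ d u < d v := by
    intro v hv
    have hre : G.Reachable v (root (G.connectedComponentMk v)) :=
      (SimpleGraph.ConnectedComponent.exact (hroot _)).symm
    obtain ⟨w, hw⟩ := hre.exists_walk_length_eq_dist
    have hdv : d v = G.dist v (root (G.connectedComponentMk v)) := rfl
    have hdu : ∀ u, G.Adj v u → d u = G.dist u (root (G.connectedComponentMk v)) := by
      intro u h
      have : G.connectedComponentMk u = G.connectedComponentMk v :=
        SimpleGraph.ConnectedComponent.sound h.symm.reachable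
      simp only [hd, this]
    rw [hdv]
    clear_value d
    clear hdv
    generalize root (G.connectedComponentMk v) = x at *
    cases w with
    | nil => exact absurd rfl hv
    | @cons _ u _ h p =>
      refine ⟨u, h, ?_⟩
      rw [hdu u h, ← hw, SimpleGraph.Walk.length_cons]
      exact Nat.lt_succ_of_le (SimpleGraph.dist_le p)
  choose! par hpar using hpar
  set g : V → Option V := fun v => if root (G.connectedComponentMk v) = v then none else some (par v) with hgdef
  have hgn : ∀ v, g v = none ↔ root (G.connectedComponentMk v) = v := by
    intro v; simp [hgdef]
  have hgs : ∀ v u, g v = some u → G.Adj v u ∧ d u < d v := by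
    intro v u h
    simp only [hgdef] at h
    split_ifs at h with h1
    cases h
    exact hpar v h1
  have hg : PMAcyc g := ⟨d, fun v u h => (hgs v u h).2⟩
  refine ⟨⟨g, hg⟩, ?_, hgn⟩
  obtain ⟨ρ, h1, h2, h3, h4, h5⟩ := exists_rho g d (fun v u h => (hgs v u h).2) hg
  have hle : pmGraph g hg ≤ G := by
    rintro a b (h | h)
    · exact (hgs _ _ h).1
    · exact (hgs _ _ h).1.symm
  apply le_antisymm _ hle
  intro u v huv
  by_contra hn
  have hb := (SimpleGraph.isAcyclic_iff_forall_adj_isBridge.1 hG) huv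
  rw [SimpleGraph.isBridge_iff] at hb
  apply hb
  have huv' : (pmGraph g hg).Reachable u v := by
    have e : ρ u = ρ v := by
      have a1 := (hgn _).1 (h1 u)
      have a2 := (hgn _).1 (h1 v)
      have b1 : G.Reachable (ρ u) (ρ v) :=
        ((h4 u).mono hle).symm.trans (huv.reachable.trans ((h4 v).mono hle))
      rw [← a1, ← a2, SimpleGraph.ConnectedComponent.sound b1]
    have := h4 u
    rw [e] at this
    exact this.trans (h4 v).symm
  refine huv'.mono ?_
  intro a b hab
  simp only [SimpleGraph.deleteEdges_adj, Set.mem_singleton_iff]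
  refine ⟨hle hab, ?_⟩
  intro h
  simp only [Sym2.eq_iff] at h
  have hab' := hab.symm
  grind

lemma compat_unique_right {V : Type} (F : RF V) (g g') (h : Compat F g) (h' : Compat F g') :
    g = g' := by
  obtain ⟨g, hg⟩ := g
  obtain ⟨g', hg'⟩ := g'
  have hadj : ∀ u v, (g u = some v ∨ g v = some u) ↔ (g' u = some v ∨ g' v = some u) := by
    intro u v
    have := h.1.symm.trans h'.1
    change (pmGraph g hg).Adj u v ↔ (pmGraph g' hg').Adj u v
    simp only [this]
  have hn : ∀ v, g v = none ↔ g' v = none := fun v => (h.2 v).trans (h'.2 v).symm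
  obtain ⟨r, hr⟩ := id hg
  have key : ∀ k v, r v ≤ k → g v = g' v := by
    intro k
    induction k with
    | zero =>
      intro v hv
      rcases e : g v with _ | u
      · exact ((hn v).1 e).symm
      · have := hr v u e; omega
    | succ k ih =>
      intro v hv
      rcases e : g v with _ | u
      · exact ((hn v).1 e).symm
      · have h1 := hr v u e
        rcases (hadj v u).1 (Or.inl e) with h2 | h2
        · exact h2.symm
        · have h3 := ih u (by omega)
          rw [h2] at h3
          have := hr u v h3
          omega
  apply Subtype.ext
  funext v
  exact key _ v le_rfl

lemma compat_exists_left {V : Type} [Finite V] (g : {g : V → Option V // PMAcyc g}) :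
    ∃ F, Compat F g := by
  obtain ⟨g, hg⟩ := g
  obtain ⟨r, hr⟩ := id hg
  obtain ⟨ρ, h1, h2, h3, h4, h5⟩ := exists_rho g r hr hg
  refine ⟨⟨pmGraph g hg, pmGraph_acyclic g hg,
    fun C => C.lift ρ (fun v w p _ => h5 v w p.reachable), ?_⟩, rfl, ?_⟩
  · intro C
    induction C using SimpleGraph.ConnectedComponent.ind with
    | h v => exact SimpleGraph.ConnectedComponent.sound (h4 v).symm
  · intro v
    change g v = none ↔ ρ v = v
    exact ⟨h2 v, fun h => h ▸ h1 v⟩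

lemma compat_unique_left {V : Type} [Finite V] (F F' : RF V) (g) (h : Compat F g)
    (h' : Compat F' g) : F = F' := by
  obtain ⟨G, hG, root, hroot⟩ := F
  obtain ⟨G', hG', root', hroot'⟩ := F'
  have e : G = G' := h.1.trans h'.1.symm
  subst e
  have : root = root' := by
    funext C
    have h1 : root' (G.connectedComponentMk (root C)) = root C :=
      (h'.2 _).1 ((h.2 (root C)).2 (by simp only [hroot]))
    rw [hroot] at h1
    exact h1.symm
  subst this
  rfl

lemma compat_card_comp {V : Type} [Finite V] (F : RF V) (g) (h : Compat F g) :
    Nat.card F.graph.ConnectedComponent = Nat.card {v // g.1 v = none} := by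
  symm
  refine Nat.card_eq_of_bijective (fun v => F.graph.connectedComponentMk v.1) ⟨?_, ?_⟩
  · rintro ⟨v, hv⟩ ⟨w, hw⟩ hvw
    simp only at hvw
    apply Subtype.ext
    change v = w
    rw [← (h.2 v).1 hv, ← (h.2 w).1 hw, hvw]
  · intro C
    exact ⟨⟨F.root C, (h.2 _).2 (by rw [F.root_mem])⟩, F.root_mem C⟩

lemma compat_card_edge {V : Type} [Finite V] (F : RF V) (g) (h : Compat F g) :
    Nat.card F.graph.edgeSet = Nat.card {v // g.1 v ≠ none} := by
  symm
  obtain ⟨g, hg⟩ := g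
  rw [h.1]
  have hs : ∀ v : {v // g v ≠ none}, ∃ u, g v.1 = some u := fun v =>
    Option.ne_none_iff_exists'.1 v.2
  choose par hpar using hs
  refine Nat.card_eq_of_bijective (fun v => (⟨s(v.1, par v), Or.inl (hpar v)⟩ :
    (pmGraph g hg).edgeSet)) ⟨?_, ?_⟩
  · intro v w hvw
    replace hvw := Sym2.eq_iff.1 (congrArg Subtype.val hvw)
    rcases hvw with ⟨h1, _⟩ | ⟨h1, h2⟩
    · exact Subtype.ext h1
    · obtain ⟨r, hr⟩ := hg
      have a1 := hr _ _ (hpar v)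
      have a2 := hr _ _ (hpar w)
      rw [h2] at a1
      rw [← h1] at a2
      omega
  · rintro ⟨e, he⟩
    induction e using Sym2.ind with
    | _ a b =>
      rcases he with he | he
      · replace he : g a = some b := he
        have hne : g a ≠ none := by simp [he]
        refine ⟨⟨a, hne⟩, Subtype.ext ?_⟩
        have := (hpar ⟨a, hne⟩).symm.trans he
        simp only [Option.some.injEq] at this
        simp only [this]
      · replace he : g b = some a := he
        have hne : g b ≠ none := by simp [he]
        refine ⟨⟨b, hne⟩, Subtype.ext ?_⟩
        have := (hpar ⟨b, hne⟩).symm.trans he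
        simp only [Option.some.injEq] at this
        simp only [this]
        exact Sym2.eq_swap

def forestEquiv (n p q : ℕ) : RootedPQForest n p q ≃
    Σ F : RF (Fin n), (F.graph.edgeSet → Fin p) × (F.graph.ConnectedComponent → Fin q) where
  toFun F := ⟨⟨F.graph, F.acyclic, F.root, F.root_mem⟩, F.edgeColor, F.rootColor⟩
  invFun F := ⟨F.1.graph, F.1.acyclic, F.1.root, F.1.root_mem, F.2.1, F.2.2⟩
  left_inv _ := rfl
  right_inv _ := rfl

def tgt (n p q : ℕ) : Fin q ⊕ (Fin n × Fin p) → Option (Fin n)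
  | Sum.inl _ => none
  | Sum.inr x => some x.1

lemma card_tgt (n p q : ℕ) (o : Option (Fin n)) :
    Nat.card {t // tgt n p q t = o} = if o = none then q else p := by
  rcases o with _ | u
  · simp only [if_true]
    refine Eq.trans (Eq.symm ?_) (Nat.card_fin q)
    refine Nat.card_eq_of_bijective (fun x => ⟨Sum.inl x, rfl⟩) ⟨?_, ?_⟩
    · intro x y h; simpa using congrArg Subtype.val h
    · rintro ⟨x | x, h⟩
      · exact ⟨x, by simp⟩
      · simp [tgt] at h
  · simp only [reduceCtorEq, if_false]
    refine Eq.trans (Eq.symm ?_) (Nat.card_fin p)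
    refine Nat.card_eq_of_bijective (fun x => ⟨Sum.inr (u, x), rfl⟩) ⟨?_, ?_⟩
    · intro x y h; simpa using congrArg Subtype.val h
    · rintro ⟨x | ⟨x, y⟩, h⟩
      · simp [tgt] at h
      · simp only [tgt, Option.some.injEq] at h
        exact ⟨y, by simp [h]⟩

theorem card_rootedPQForest (n p q : ℕ) (hn : 0 < n) (hp : 0 < p) (hq : 0 < q) :
    Nat.card (RootedPQForest n p q) = q * (q + n * p) ^ (n - 1) := by
  classical
  choose Φ hΦ using (compat_exists_right (V := Fin n))
  have hbij : Function.Bijective Φ := by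
    constructor
    · intro F F' h
      exact compat_unique_left F F' (Φ F) (hΦ F) (h ▸ hΦ F')
    · intro g
      obtain ⟨F, hF⟩ := compat_exists_left g
      exact ⟨F, compat_unique_right F _ _ (hΦ F) hF⟩
  have : Finite (RF (Fin n)) := Finite.of_injective Φ hbij.1
  have := Fintype.ofFinite (RF (Fin n))
  have := Fintype.ofFinite {g : Fin n → Option (Fin n) // PMAcyc g}
  set T := Fin q ⊕ (Fin n × Fin p)
  have e : {f : Fin n → T // PMAcyc (fun v => tgt n p q (f v))} ≃
      Σ g : {g : Fin n → Option (Fin n) // PMAcyc g},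
        ((v : Fin n) → {t // tgt n p q t = g.1 v}) :=
    { toFun := fun f => ⟨⟨fun v => tgt n p q (f.1 v), f.2⟩, fun v => ⟨f.1 v, rfl⟩⟩
      invFun := fun x => ⟨fun v => (x.2 v).1, by
        have : (fun v => tgt n p q (x.2 v).1) = x.1.1 := funext fun v => (x.2 v).2
        rw [this]; exact x.1.2⟩
      left_inv := fun f => rfl
      right_inv := by
        rintro ⟨⟨g, hg⟩, f⟩
        obtain ⟨f0, h, rfl⟩ : ∃ (f0 : Fin n → T) (h : ∀ v, tgt n p q (f0 v) = g v),
            f = fun v => ⟨f0 v, h v⟩ := ⟨fun v => (f v).1, fun v => (f v).2, rfl⟩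
        obtain rfl := funext h
        rfl }
  have hcard : Nat.card (RootedPQForest n p q) =
      Nat.card {f : Fin n → T // PMAcyc (fun v => tgt n p q (f v))} := by
    rw [Nat.card_congr e, Nat.card_congr (forestEquiv n p q), Nat.card_sigma, Nat.card_sigma]
    refine Fintype.sum_bijective Φ hbij _ _ ?_
    intro F
    rw [Nat.card_prod, Nat.card_fun, Nat.card_fun, compat_card_comp F _ (hΦ F),
      compat_card_edge F _ (hΦ F), Nat.card_pi]
    simp only [card_tgt, Nat.card_fin]
    rw [Finset.prod_ite, Finset.prod_const, Finset.prod_const, mul_comm,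
      Nat.card_eq_fintype_card, Nat.card_eq_fintype_card, Fintype.card_subtype,
      Fintype.card_subtype]
  have hmain := card_acyc n T (tgt n p q)
  rw [← hcard, card_tgt] at hmain
  have hT : Fintype.card T = q + n * p := by simp [T]
  rw [hT] at hmain
  obtain ⟨m, rfl⟩ : ∃ m, n = m + 1 := ⟨n - 1, by omega⟩
  have hpos : 0 < q + (m + 1) * p := by positivity
  apply Nat.eq_of_mul_eq_mul_left hpos
  rw [hmain]
  simp only [if_true, Nat.add_sub_cancel, pow_succ]
  ring
end
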